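/- Let k, l be natural numbers and let ∂₂ : ℂ^k → ℂ^{k+l} and ∂₁ : ℂ^{k+l} → ℂ^l be linear maps with ∂₁ ∘ ∂₂ = 0. Suppose J is a subset of the index set Fin (k+l) of cardinality l such that: (a) the l × l matrix ∂₁(J) formed by the columns of ∂₁ indexed by J is invertible, and (b) the k × k matrix ∂₂(J) obtained from ∂₂ by deleting the rows indexed by J is invertible. Then the complex 0 → ℂ^k → ℂ^{k+l} → ℂ^l → 0 is exact: ∂₂ is injective, ∂₁ is surjective, and the kernel of ∂₁ equals the range of ∂₂. -/

import Mathlib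

theorem stmt_10 (k l : ℕ)
    (d2 : Matrix (Fin (k + l)) (Fin k) ℂ) (d1 : Matrix (Fin l) (Fin (k + l)) ℂ)
    (hcomp : d1 * d2 = 0)
    (J : Finset (Fin (k + l))) (hJ : J.card = l) (hJc : Jᶜ.card = k)
    (h1 : IsUnit (d1.submatrix id (fun i => ((J.orderIsoOfFin hJ) i : Fin (k + l)))))
    (h2 : IsUnit (d2.submatrix (fun i => ((Jᶜ.orderIsoOfFin hJc) i : Fin (k + l))) id)) :
    Function.Injective d2.mulVecLin ∧ Function.Surjective d1.mulVecLin ∧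
      LinearMap.ker d1.mulVecLin = LinearMap.range d2.mulVecLin := by
  have hinj : Function.Injective d2.mulVecLin := by
    intro v w hvw
    have h := Matrix.mulVec_injective_of_isUnit h2
    apply h
    funext i
    exact congrFun hvw ((Jᶜ.orderIsoOfFin hJc) i : Fin (k + l))
  have hsurj : Function.Surjective d1.mulVecLin := by
    intro y
    obtain ⟨x, hx⟩ := (Matrix.mulVec_surjective_iff_isUnit.mpr h1) y
    refine ⟨(Matrix.submatrix (1 : Matrix (Fin (k + l)) (Fin (k + l)) ℂ) id
      (fun i => ((J.orderIsoOfFin hJ) i : Fin (k + l)))).mulVec x, ?_⟩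
    rw [Matrix.mulVecLin_apply, Matrix.mulVec_mulVec, ← hx]
    congr 1
    ext i j
    simp [Matrix.mul_apply, Matrix.one_apply]
  refine ⟨hinj, hsurj, ?_⟩
  symm
  apply Submodule.eq_of_le_of_finrank_eq
  · rintro _ ⟨v, rfl⟩
    simp [Matrix.mulVec_mulVec, hcomp]
  · have e1 := LinearMap.finrank_range_of_inj hinj
    have e2 := d1.mulVecLin.finrank_range_add_finrank_ker
    rw [LinearMap.range_eq_top.mpr hsurj, finrank_top] at e2
    simp only [Module.finrank_fin_fun] at e1 e2
    omega
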